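/- arXiv:2205.08511 — 2 statements merged into one kernel-verified Lean document; each statement's English description precedes it below -/
import Mathlib

section
/- Let d_j be the product of the first j odd primes. Define B_t = { n ∈ ℕ : d_t ∣ n } ∩ [2^{2^{t^2}}, 2^{2^{(t+1)^2}}) and B = ⋃_{t≥1} B_t. Then there is a constant c > 0 such that for all sufficiently large x, the counting function B(x) = #{ n ∈ B : n ≤ x } satisfies B(x) ≥ c · x / exp(3 · sqrt(log log x) · log log log x). -/
open Real Filter

/-- The `i`-th odd prime (1-indexed): `oddPrime 1 = 3`, `oddPrime 2 = 5`, ... -/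
noncomputable def oddPrime (i : ℕ) : ℕ := Nat.nth (fun p => p.Prime ∧ Odd p) (i - 1)

/-- `dProd j` is the product of the first `j` odd primes. -/
noncomputable def dProd (j : ℕ) : ℕ := ∏ i ∈ Finset.Icc 1 j, oddPrime i

/-- `Bt t = { n : dProd t ∣ n } ∩ [2^(2^(t^2)), 2^(2^((t+1)^2)))`. -/
noncomputable def Bt (t : ℕ) : Set ℕ :=
  {n | dProd t ∣ n ∧ 2 ^ 2 ^ t ^ 2 ≤ n ∧ n < 2 ^ 2 ^ (t + 1) ^ 2}

/-- `Bset = ⋃_{t ≥ 1} Bt t`. -/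
noncomputable def Bset : Set ℕ := ⋃ t ≥ 1, Bt t

/-- Counting function of a set of naturals: number of elements `≤ x`. -/
noncomputable def countOf (S : Set ℕ) (x : ℝ) : ℕ := Nat.card {n : ℕ | n ∈ S ∧ (n : ℝ) ≤ x}

lemma oddP_inf : (Set.ofPred (fun p : ℕ => p.Prime ∧ Odd p)).Infinite := by
  rw [Set.infinite_iff_exists_gt]
  intro a
  obtain ⟨p, hp, hp2⟩ := Nat.exists_infinite_primes (a + 3)
  exact ⟨p, ⟨hp2, hp2.odd_of_ne_two (by omega)⟩, by omega⟩

lemma oddPrime_mem (i : ℕ) : (oddPrime i).Prime ∧ Odd (oddPrime i) :=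
  Nat.nth_mem_of_infinite oddP_inf (i - 1)

lemma three_le_oddPrime (i : ℕ) : 3 ≤ oddPrime i := by
  obtain ⟨h, h2⟩ := oddPrime_mem i
  have := h.two_le
  rcases h2 with ⟨k, hk⟩
  omega

lemma count_odd (n : ℕ) :
    Nat.count Nat.Prime n ≤ Nat.count (fun p : ℕ => p.Prime ∧ Odd p) n + 1 := by
  rw [Nat.count_eq_card_filter_range, Nat.count_eq_card_filter_range]
  refine le_trans (Finset.card_le_card (t := insert 2 ((Finset.range n).filter
    (fun p : ℕ => p.Prime ∧ Odd p))) ?_) (Finset.card_insert_le _ _)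
  intro p hp
  simp only [Finset.mem_filter, Finset.mem_insert] at hp ⊢
  by_cases h : p = 2
  · exact Or.inl h
  · exact Or.inr ⟨hp.1, hp.2, hp.2.odd_of_ne_two h⟩

lemma pi_cube (t : ℕ) (ht : 7 ≤ t) : t + 1 < Nat.primeCounting (t ^ 3) := by
  by_contra! h
  have h1 := Chebyshev.psi_ge (t ^ 3)
  have h2 := Chebyshev.psi_le_primeCounting_mul_log (t ^ 3)
  have ht' : (7 : ℝ) ≤ t := by exact_mod_cast ht
  have h' : (Nat.primeCounting (t ^ 3) : ℝ) ≤ t + 1 := by exact_mod_cast h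
  push_cast at h1 h2
  have hl : Real.log ((t : ℝ) ^ 3) ≤ 3 * t := by
    rw [Real.log_pow]
    have := Real.log_le_sub_one_of_pos (show (0 : ℝ) < t by linarith)
    push_cast; linarith
  have hl0 : 0 ≤ Real.log ((t : ℝ) ^ 3) := Real.log_nonneg (one_le_pow₀ (by linarith))
  have hl2 : Real.log ((t : ℝ) ^ 3 + 1) ≤ 3 * t := by
    have : Real.log ((t : ℝ) ^ 3 + 1) ≤ Real.log (((t : ℝ) + 1) ^ 3) := by
      apply Real.log_le_log (by positivity)
      nlinarith [sq_nonneg (t : ℝ)]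
    rw [Real.log_pow] at this
    have := Real.log_le_sub_one_of_pos (show (0 : ℝ) < t + 1 by linarith)
    push_cast at *; linarith
  have h3 : (Nat.primeCounting (t ^ 3) : ℝ) * Real.log ((t : ℝ) ^ 3) ≤ (t + 1) * (3 * t) :=
    mul_le_mul h' hl hl0 (by linarith)
  have h4 : (0.69 : ℝ) * t ^ 3 ≤ t ^ 3 * Real.log 2 := by
    have := Real.log_two_gt_d9
    have : (0 : ℝ) ≤ t ^ 3 := by positivity
    nlinarith
  have h5 : (7 : ℝ) * t ^ 2 ≤ t ^ 3 := by nlinarith [sq_nonneg (t : ℝ)]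
  nlinarith

lemma oddPrime_le {t i : ℕ} (ht : 7 ≤ t) (hi : i ≤ t) : oddPrime i ≤ t ^ 3 := by
  have h1 := pi_cube t ht
  have h2 := count_odd (t ^ 3 + 1)
  have h3 : Nat.primeCounting (t ^ 3) = Nat.count Nat.Prime (t ^ 3 + 1) := rfl
  have := Nat.nth_lt_of_lt_count (p := fun p : ℕ => p.Prime ∧ Odd p)
    (n := t ^ 3 + 1) (k := i - 1) (by omega)
  unfold oddPrime
  omega

lemma dProd_le {t : ℕ} (ht : 7 ≤ t) : dProd t ≤ (t ^ 3) ^ t := by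
  unfold dProd
  have := Finset.prod_le_pow_card (Finset.Icc 1 t) oddPrime (t ^ 3)
    (fun i hi => oddPrime_le ht (Finset.mem_Icc.1 hi).2)
  simpa using this

lemma le_dProd {t : ℕ} (ht : 7 ≤ t) : 4 ≤ dProd t := by
  unfold dProd
  have := Finset.pow_card_le_prod (Finset.Icc 1 t) oddPrime 3
    (fun i hi => three_le_oddPrime i)
  simp only [Nat.card_Icc, Nat.add_sub_cancel] at this
  have h2 : 3 ^ 7 ≤ 3 ^ t := Nat.pow_le_pow_right (by norm_num) ht
  exact le_trans (by norm_num) (h2.trans this)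

lemma mem_B {t n : ℕ} (hd : dProd t ∣ n) (h4 : 4 ≤ n) (hn : n < 2 ^ 2 ^ (t + 1) ^ 2) :
    n ∈ Bset := by
  classical
  have hex : ∃ s, n < 2 ^ 2 ^ (s + 1) ^ 2 := ⟨t, hn⟩
  obtain ⟨s, hs, hmin⟩ : ∃ s, n < 2 ^ 2 ^ (s + 1) ^ 2 ∧ ∀ r < s, ¬ n < 2 ^ 2 ^ (r + 1) ^ 2 :=
    ⟨Nat.find hex, Nat.find_spec hex, fun r hr => Nat.find_min hex hr⟩
  have hst : s ≤ t := by
    by_contra! h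
    exact hmin t h hn
  have hs1 : 1 ≤ s := by
    by_contra! h
    have : s = 0 := by omega
    subst this
    norm_num at hs
    omega
  simp only [Bset, Set.mem_iUnion]
  refine ⟨s, hs1, ?_, ?_, hs⟩
  · exact (Finset.prod_dvd_prod_of_subset _ _ _ (Finset.Icc_subset_Icc_right hst)).trans hd
  · have := hmin (s - 1) (by omega)
    rw [Nat.sub_add_cancel hs1] at this
    omega

lemma count_ge {t : ℕ} (ht : 7 ≤ t) {x : ℝ} (hx : x < (2 : ℝ) ^ 2 ^ (t + 1) ^ 2)
    (hd : (dProd t : ℝ) ≤ x) : x / (2 * dProd t) ≤ (countOf Bset x : ℝ) := by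
  have h4 := le_dProd ht
  have hd0 : (0 : ℝ) < dProd t := by exact_mod_cast (by omega : 0 < dProd t)
  set y := x / dProd t with hy
  have hy1 : 1 ≤ y := by rw [hy, le_div_iff₀ hd0]; linarith
  have hfin : {n : ℕ | n ∈ Bset ∧ (n : ℝ) ≤ x}.Finite := by
    apply (Set.finite_Iic ⌊x⌋₊).subset
    intro n hn
    exact Nat.le_floor hn.2
  have hc : ⌊y⌋₊ ≤ countOf Bset x := by
    unfold countOf
    have h1 : ((Finset.Icc 1 ⌊y⌋₊).image (fun k => dProd t * k)).card = ⌊y⌋₊ := by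
      rw [Finset.card_image_of_injective]
      · simp
      · intro a b h
        exact Nat.eq_of_mul_eq_mul_left (by omega) h
    rw [← h1]
    change _ ≤ Set.ncard {n : ℕ | n ∈ Bset ∧ (n : ℝ) ≤ x}
    rw [← Set.ncard_coe_finset]
    apply Set.ncard_le_ncard _ hfin
    intro n hn
    simp only [Finset.coe_image, Set.mem_image, Finset.mem_coe, Finset.mem_Icc] at hn
    obtain ⟨k, ⟨hk1, hk2⟩, rfl⟩ := hn
    have hk : (k : ℝ) ≤ y := (Nat.le_floor_iff (by linarith)).1 hk2
    have hle : ((dProd t * k : ℕ) : ℝ) ≤ x := by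
      rw [hy, le_div_iff₀ hd0] at hk
      push_cast; linarith
    refine ⟨mem_B (t := t) (Dvd.intro _ rfl) (by nlinarith) ?_, hle⟩
    exact_mod_cast lt_of_le_of_lt hle hx
  have hf : y / 2 ≤ (⌊y⌋₊ : ℝ) := by
    have h1 : (1 : ℝ) ≤ ⌊y⌋₊ := by exact_mod_cast (Nat.one_le_floor_iff y).2 hy1
    have h2 := Nat.lt_floor_add_one y
    linarith
  have : x / (2 * dProd t) = y / 2 := by rw [hy]; field_simp
  rw [this]
  exact hf.trans (by exact_mod_cast hc)

theorem stmt_3 : ∃ c : ℝ, 0 < c ∧ ∀ᶠ x : ℝ in atTop,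
    (countOf Bset x : ℝ) ≥
      c * x / Real.exp (3 * Real.sqrt (Real.log (Real.log x)) *
        Real.log (Real.log (Real.log x))) := by
  refine ⟨1 / 2, by norm_num, ?_⟩
  filter_upwards [(Real.tendsto_log_atTop.comp Real.tendsto_log_atTop).eventually_ge_atTop 30,
    Real.tendsto_log_atTop.eventually_gt_atTop 0, eventually_gt_atTop 0] with x hL hlx hx
  simp only [Function.comp] at hL
  set L := Real.log (Real.log x) with hLdef
  have heL : Real.exp L = Real.log x := Real.exp_log hlx
  have heeL : Real.exp (Real.exp L) = x := by rw [heL, Real.exp_log hx]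
  have hl2 := Real.log_two_gt_d9
  have hl2' := Real.log_two_lt_d9
  set t := ⌊√(2 * L)⌋₊ with ht
  have ht7 : 7 ≤ t := by
    apply Nat.le_floor
    apply Real.le_sqrt_of_sq_le
    push_cast; linarith
  have htle : (t : ℝ) ≤ √(2 * L) := Nat.floor_le (Real.sqrt_nonneg _)
  have htlt : √(2 * L) < t + 1 := Nat.lt_floor_add_one _
  have ht7' : (7 : ℝ) ≤ t := by exact_mod_cast ht7
  have hsq : 2 * L < ((t : ℝ) + 1) ^ 2 := by
    rw [Real.sqrt_lt' (by linarith)] at htlt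
    exact htlt
  have hxlt : x < (2 : ℝ) ^ 2 ^ (t + 1) ^ 2 := by
    rw [← Real.log_lt_log_iff hx (by positivity), Real.log_pow]
    rw [← Real.log_lt_log_iff hlx (by positivity)]
    push_cast
    rw [Real.log_mul (by positivity) (by positivity), Real.log_pow]
    push_cast
    have h1 := Real.one_sub_inv_le_log_of_pos (show 0 < Real.log 2 by linarith)
    have h2 : (Real.log 2)⁻¹ ≤ 2 := by
      rw [inv_le_comm₀ (by linarith) (by norm_num)]; linarith
    have h3 : 2 * L * 0.69 ≤ ((t : ℝ) + 1) ^ 2 * Real.log 2 := by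
      apply mul_le_mul hsq.le (by linarith) (by norm_num) (by positivity)
    linarith
  set E := Real.exp (3 * √L * Real.log L) with hE
  have hs0 : 0 < √L := Real.sqrt_pos.2 (by linarith)
  have hlogL : 2 ≤ Real.log L := by
    rw [Real.le_log_iff_exp_le (by linarith)]
    have h1 : Real.exp 2 = Real.exp 1 ^ 2 := by rw [← Real.exp_nat_mul]; norm_num
    have h2 := Real.exp_one_lt_d9
    have h3 := Real.exp_pos 1
    rw [h1]; nlinarith
  have hdE : (dProd t : ℝ) ≤ E := by
    have h1 : (dProd t : ℝ) ≤ ((t : ℝ) ^ 3) ^ t := by exact_mod_cast dProd_le ht7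
    refine h1.trans ?_
    rw [← Real.log_le_iff_le_exp (by positivity), Real.log_pow, Real.log_pow]
    push_cast
    have hlogt : Real.log t ≤ (Real.log L + 0.7) / 2 := by
      have := Real.log_le_log (by linarith) htle
      rw [Real.log_sqrt (by linarith), Real.log_mul (by norm_num) (by linarith)] at this
      linarith
    have hlogt0 : 0 ≤ Real.log t := Real.log_nonneg (by linarith)
    have h2 : (t : ℝ) ≤ 1.42 * √L := by
      rw [Real.sqrt_mul (by norm_num)] at htle
      have : √2 ≤ 1.42 := by
        rw [Real.sqrt_le_left (by norm_num)]; norm_num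
      nlinarith
    have h3 : (t : ℝ) * Real.log t ≤ (1.42 * √L) * ((Real.log L + 0.7) / 2) :=
      mul_le_mul h2 hlogt hlogt0 (by positivity)
    nlinarith
  have hEx : E ≤ x := by
    rw [← heeL, hE]
    apply Real.exp_le_exp.2
    have h1 : Real.log L ≤ 2 * √L := by
      have h2 := Real.log_le_sub_one_of_pos hs0
      rw [Real.log_sqrt (by linarith)] at h2
      linarith
    have h3 := Real.quadratic_le_exp_of_nonneg (show 0 ≤ L by linarith)
    have h4 : √L * √L = L := Real.mul_self_sqrt (by linarith)
    nlinarith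
  have hd0 : (0 : ℝ) < dProd t := by
    have := le_dProd ht7
    exact_mod_cast (by omega : 0 < dProd t)
  refine ge_iff_le.2 (le_trans ?_ (count_ge ht7 hxlt (hdE.trans hEx)))
  rw [div_le_div_iff₀ (by positivity) (by positivity)]
  nlinarith
end

section
/- Let C = { 2^a + b : a ∈ ℕ, b ∈ B } where B = ⋃_{t≥1} ({ n : d_t ∣ n } ∩ [2^{2^{t^2}}, 2^{2^{(t+1)^2}})) and d_t is the product of the first t odd primes. Then the counting function C(x) = #{ c ∈ C : c ≤ x } satisfies C(x) = O(x / log log log x); in particular C(x) = o(x) as x → ∞. -/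
open Real Filter

/-- `Cset = { 2^a + b : a ≥ 1, b ∈ Bset }`. -/
noncomputable def Cset : Set ℕ := {c | ∃ a : ℕ, 1 ≤ a ∧ ∃ b ∈ Bset, c = 2 ^ a + b}

/-- product of odd primes below t -/
noncomputable def DD (t : ℕ) : ℕ := ∏ p ∈ t.primesBelow.erase 2, p

lemma DD_pos (t : ℕ) : 0 < DD t := by
  apply Finset.prod_pos
  intro p hp
  exact (Nat.prime_of_mem_primesBelow (Finset.mem_of_mem_erase hp)).pos

lemma DD_le (t : ℕ) : DD t ≤ 4 ^ t := by
  refine le_trans ?_ (primorial_le_four_pow t)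
  rw [primorial_eq_prod_primesLE]
  apply Finset.prod_le_prod_of_subset_of_one_le'
  · intro p hp
    have := Nat.mem_primesBelow.1 (Finset.mem_of_mem_erase hp)
    exact Nat.mem_primesLE.2 ⟨this.1.le, this.2⟩
  · intro p hp _
    exact (Nat.mem_primesLE.1 hp).2.one_le

lemma dvd_dProd {t s p : ℕ} (hts : t ≤ s) (hp : p.Prime) (h2 : p ≠ 2) (hpt : p < t) :
    p ∣ dProd s := by
  classical
  have hodd : Odd p := hp.odd_of_ne_two h2
  have h1 : oddPrime (Nat.count (fun p => p.Prime ∧ Odd p) p + 1) = p := by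
    unfold oddPrime
    rw [Nat.add_sub_cancel]
    exact Nat.nth_count (p := fun p => p.Prime ∧ Odd p) ⟨hp, hodd⟩
  have h3 : Nat.count (fun p => p.Prime ∧ Odd p) p ≤ p := Nat.count_le _
  conv_lhs => rw [← h1]
  unfold dProd
  apply Finset.dvd_prod_of_mem
  rw [Finset.mem_Icc]
  omega

lemma DD_dvd {t s : ℕ} (hts : t ≤ s) : DD t ∣ dProd s := by
  apply Finset.prod_primes_dvd
  · intro p hp
    exact (Nat.prime_of_mem_primesBelow (Finset.mem_of_mem_erase hp)).prime
  · intro p hp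
    have := Nat.mem_primesBelow.1 (Finset.mem_of_mem_erase hp)
    exact dvd_dProd hts this.2 (Finset.ne_of_mem_erase hp) this.1

lemma DD_coprime_two (t : ℕ) : Nat.Coprime (DD t) 2 := by
  apply Nat.Coprime.prod_left
  intro p hp
  have := Nat.mem_primesBelow.1 (Finset.mem_of_mem_erase hp)
  exact (Nat.coprime_primes this.2 Nat.prime_two).2 (Finset.ne_of_mem_erase hp)

noncomputable def invHom : ℕ →* ℝ where
  toFun n := (n : ℝ)⁻¹
  map_one' := by simp
  map_mul' := by intro a b; push_cast; rw [mul_inv]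

lemma log_le_prod (t : ℕ) (ht : 1 ≤ t) :
    Real.log t ≤ ∏ p ∈ t.primesBelow, (1 - (p : ℝ)⁻¹)⁻¹ := by
  have h := (EulerProduct.summable_and_hasSum_smoothNumbers_prod_primesBelow_geometric
    (f := invHom) (by
      intro p hp
      have : (1 : ℝ) < p := by exact_mod_cast hp.one_lt
      simp only [invHom, MonoidHom.coe_mk, OneHom.coe_mk, norm_inv, Real.norm_natCast]
      exact inv_lt_one_of_one_lt₀ this) t).2
  have hl := log_add_one_le_harmonic (t - 1)
  rw [Nat.sub_add_cancel ht] at hl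
  refine hl.trans ?_
  have hinj : Function.Injective (fun i : Fin (t - 1) =>
      (⟨i.1 + 1, Nat.mem_smoothNumbers_of_lt (by omega) (by omega)⟩ : t.smoothNumbers)) := by
    intro i j hij
    simp at hij
    exact Fin.ext hij
  have h2 := sum_le_hasSum (Finset.univ.map ⟨_, hinj⟩) (by
    intro i _
    simp only [invHom, MonoidHom.coe_mk, OneHom.coe_mk]
    positivity) h
  refine le_trans (le_of_eq ?_) h2
  rw [Finset.sum_map]
  simp only [invHom, MonoidHom.coe_mk, OneHom.coe_mk, Function.Embedding.coeFn_mk]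
  unfold harmonic
  push_cast
  rw [Finset.sum_range]

lemma totient_DD (t : ℕ) (ht : 3 ≤ t) :
    ((DD t).totient : ℝ) / DD t ≤ 2 / Real.log t := by
  have hpf : (DD t).primeFactors = t.primesBelow.erase 2 := by
    apply Nat.primeFactors_prod
    intro p hp
    exact Nat.prime_of_mem_primesBelow (Finset.mem_of_mem_erase hp)
  have h1 : ((DD t).totient : ℝ) = DD t * ∏ p ∈ t.primesBelow.erase 2, (1 - (p : ℝ)⁻¹) := by
    have := Nat.totient_eq_mul_prod_factors (DD t)
    rw [hpf] at this
    have h := congrArg (fun q : ℚ => (q : ℝ)) this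
    push_cast at h
    exact h
  have hD : (0 : ℝ) < DD t := by exact_mod_cast DD_pos t
  rw [h1, mul_div_cancel_left₀ _ hD.ne']
  have h2 := log_le_prod t (by omega)
  have hlog : 0 < Real.log t := Real.log_pos (by exact_mod_cast (by omega : 1 < t))
  have h3 : (2 : ℕ) ∈ t.primesBelow := Nat.mem_primesBelow.2 ⟨by omega, Nat.prime_two⟩
  rw [Finset.prod_inv_distrib, ← Finset.mul_prod_erase _ _ h3] at h2
  have hP : 0 < ∏ p ∈ t.primesBelow.erase 2, (1 - (p : ℝ)⁻¹) := by
    apply Finset.prod_pos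
    intro p hp
    have : (1 : ℝ) < p := by
      exact_mod_cast (Nat.prime_of_mem_primesBelow (Finset.mem_of_mem_erase hp)).one_lt
    have := inv_lt_one_of_one_lt₀ this
    linarith
  set P := ∏ p ∈ t.primesBelow.erase 2, (1 - (p : ℝ)⁻¹)
  rw [le_div_iff₀ hlog]
  have : P * Real.log t ≤ P * ((1 - ((2 : ℕ) : ℝ)⁻¹) * P)⁻¹ :=
    mul_le_mul_of_nonneg_left h2 hP.le
  refine this.trans (le_of_eq ?_)
  push_cast
  field_simp
  norm_num

lemma coprime_count (t n : ℕ) (ht : 3 ≤ t) :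
    (((Finset.range n).filter (Nat.Coprime (DD t))).card : ℝ) ≤ n * (2 / Real.log t) + 4 ^ t := by
  have h := Nat.Ico_filter_coprime_le (a := DD t) 0 n (DD_pos t).ne'
  rw [zero_add, ← Finset.range_eq_Ico] at h
  have h' : (((Finset.range n).filter (Nat.Coprime (DD t))).card : ℝ) ≤
      (DD t).totient * (((n / DD t : ℕ) : ℝ) + 1) := by exact_mod_cast h
  have hD : (0 : ℝ) < DD t := by exact_mod_cast DD_pos t
  have h1 : ((n / DD t : ℕ) : ℝ) ≤ n / DD t := Nat.cast_div_le
  have h2 : ((DD t).totient : ℝ) ≤ 4 ^ t := by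
    exact_mod_cast (Nat.totient_le _).trans (DD_le t)
  have h3 := totient_DD t ht
  calc _ ≤ (DD t).totient * (((n / DD t : ℕ) : ℝ) + 1) := h'
    _ ≤ (DD t).totient * ((n : ℝ) / DD t + 1) := by gcongr
    _ = n * (((DD t).totient : ℝ) / DD t) + (DD t).totient := by field_simp
    _ ≤ _ := by gcongr

lemma card_C (x : ℝ) (hx : 1 ≤ x) (t : ℕ) :
    countOf Cset x ≤ ((Finset.range (⌊x⌋₊ + 1)).filter (Nat.Coprime (DD t))).card +
      (Nat.log 2 ⌊x⌋₊ + 1) * 2 ^ 2 ^ t ^ 2 := by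
  classical
  set F : Finset ℕ := ((Finset.range (⌊x⌋₊ + 1)).filter (Nat.Coprime (DD t))) ∪
    ((Finset.range (Nat.log 2 ⌊x⌋₊ + 1)) ×ˢ (Finset.range (2 ^ 2 ^ t ^ 2))).image
      (fun q => 2 ^ q.1 + q.2) with hF
  have hsub : {n : ℕ | n ∈ Cset ∧ (n : ℝ) ≤ x} ⊆ (F : Set ℕ) := by
    rintro n ⟨⟨a, ha, b, hb, rfl⟩, hn⟩
    have hn' : 2 ^ a + b ≤ ⌊x⌋₊ := Nat.le_floor hn
    simp only [Bset, Set.mem_iUnion] at hb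
    obtain ⟨s, hs, hd, hb1, hb2⟩ := hb
    rw [hF, Finset.coe_union]
    by_cases hts : t ≤ s
    · left
      rw [Finset.mem_coe, Finset.mem_filter, Finset.mem_range]
      refine ⟨by omega, ?_⟩
      obtain ⟨m, rfl⟩ := (DD_dvd hts).trans hd
      rw [Nat.coprime_add_mul_left_right]
      exact (DD_coprime_two t).pow_right a
    · right
      rw [Finset.mem_coe, Finset.mem_image]
      refine ⟨(a, b), ?_, rfl⟩
      rw [Finset.mem_product, Finset.mem_range, Finset.mem_range]
      constructor
      · have : a ≤ Nat.log 2 ⌊x⌋₊ :=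
          Nat.le_log_of_pow_le (by norm_num) (by omega)
        exact Nat.lt_succ_of_le this
      · refine lt_of_lt_of_le hb2 ?_
        apply Nat.pow_le_pow_right (by norm_num)
        apply Nat.pow_le_pow_right (by norm_num)
        apply Nat.pow_le_pow_left
        omega
  have h1 : countOf Cset x ≤ F.card := by
    unfold countOf
    have := Nat.card_mono F.finite_toSet hsub
    simpa using this
  refine h1.trans ((Finset.card_union_le _ _).trans ?_)
  gcongr
  refine Finset.card_image_le.trans ?_
  simp

lemma pow_bound (k : ℕ) (hk : 5 ≤ k) : 2 * k + 1 ≤ 2 ^ (k - 1) := by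
  induction k, hk using Nat.le_induction with
  | base => norm_num
  | succ n hn ih =>
    have : 2 ^ (n + 1 - 1) = 2 * 2 ^ (n - 1) := by
      rw [← pow_succ']; congr 1; omega
    omega

lemma main_bound (x : ℝ) (hx : 1 ≤ x) (k t : ℕ) (ht : 3 ≤ t)
    (hk : k = Nat.log 2 (Nat.log 2 ⌊x⌋₊)) (htk : (t + 1) ^ 2 ≤ k) (hkt : k < (t + 2) ^ 2) :
    (countOf Cset x : ℝ) ≤ 6 * x / Real.log t ∧ Real.log (Real.log (Real.log x)) ≤ 4 * Real.log t := by
  have hx0 : 0 < x := by linarith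
  have hfl : (⌊x⌋₊ : ℝ) ≤ x := Nat.floor_le hx0.le
  have hfl1 : 1 ≤ ⌊x⌋₊ := Nat.le_floor (by simpa using hx)
  have hk16 : 16 ≤ k := by nlinarith
  set l := Nat.log 2 ⌊x⌋₊ with hl
  have hl0 : l ≠ 0 := by
    rintro h
    rw [h] at hk
    simp at hk
    omega
  have hkl : 2 ^ k ≤ l := by rw [hk]; exact Nat.pow_log_le_self 2 hl0
  have hlk : l < 2 ^ (k + 1) := by rw [hk]; exact Nat.lt_pow_succ_log_self (by norm_num) _
  have hlx : 2 ^ l ≤ ⌊x⌋₊ := Nat.pow_log_le_self 2 (by omega)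
  have hxl : ⌊x⌋₊ < 2 ^ (l + 1) := Nat.lt_pow_succ_log_self (by norm_num) _
  have ht1 : (1 : ℝ) < t := by exact_mod_cast (by omega : 1 < t)
  have hlog : 0 < Real.log t := Real.log_pos ht1
  have hlt : Real.log t ≤ t := (Real.log_le_sub_one_of_pos (by linarith)).trans (by linarith)
  have htk' : t ≤ k := by nlinarith
  have ht2 : t < 2 ^ t := Nat.lt_two_pow_self
  have hpb := pow_bound k (by omega)
  have hkk : 2 ^ k = 2 * 2 ^ (k - 1) := by
    rw [← pow_succ']; congr 1; omega
  constructor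
  · have h1 := card_C x hx t
    have h2 := coprime_count t (⌊x⌋₊ + 1) ht
    -- small pieces
    have e1 : (4 : ℝ) ^ t * t ≤ x := by
      refine le_trans ?_ hfl
      have : 4 ^ t * t ≤ ⌊x⌋₊ := by
        refine le_trans ?_ hlx
        calc 4 ^ t * t ≤ (2 ^ 2) ^ t * 2 ^ t := by gcongr; norm_num
          _ = 2 ^ (2 * t + t) := by rw [← pow_mul, ← pow_add]
          _ ≤ 2 ^ l := by
            apply Nat.pow_le_pow_right (by norm_num)
            omega
      exact_mod_cast this
    have e2 : (((l + 1) * 2 ^ 2 ^ t ^ 2 : ℕ) : ℝ) * t ≤ x := by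
      refine le_trans ?_ hfl
      have : (l + 1) * 2 ^ 2 ^ t ^ 2 * t ≤ ⌊x⌋₊ := by
        refine le_trans ?_ hlx
        calc (l + 1) * 2 ^ 2 ^ t ^ 2 * t ≤ 2 ^ (k + 1) * 2 ^ 2 ^ (k - 1) * 2 ^ t := by
              gcongr
              · omega
              · norm_num
              · norm_num
              · have : t ^ 2 + 1 ≤ (t + 1) ^ 2 := by nlinarith
                omega
          _ = 2 ^ (k + 1 + 2 ^ (k - 1) + t) := by rw [← pow_add, ← pow_add]
          _ ≤ 2 ^ l := by
            apply Nat.pow_le_pow_right (by norm_num)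
            omega
      exact_mod_cast this
    have h1' : (countOf Cset x : ℝ) ≤
        (((Finset.range (⌊x⌋₊ + 1)).filter (Nat.Coprime (DD t))).card : ℝ) +
          (((l + 1) * 2 ^ 2 ^ t ^ 2 : ℕ) : ℝ) := by exact_mod_cast h1
    push_cast at h2
    set E2 := (((l + 1) * 2 ^ 2 ^ t ^ 2 : ℕ) : ℝ) with hE2
    have hE2n : 0 ≤ E2 := by rw [hE2]; positivity
    have h4n : (0 : ℝ) ≤ 4 ^ t := by positivity
    rw [le_div_iff₀ hlog]
    calc (countOf Cset x : ℝ) * Real.log t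
        ≤ (((⌊x⌋₊ : ℝ) + 1) * (2 / Real.log t) + 4 ^ t + E2) * Real.log t := by
          gcongr; linarith
      _ = ((⌊x⌋₊ : ℝ) + 1) * 2 + 4 ^ t * Real.log t + E2 * Real.log t := by
          field_simp
      _ ≤ (x + 1) * 2 + 4 ^ t * t + E2 * t := by gcongr
      _ ≤ 6 * x := by linarith
  · have a1 : x < 2 ^ (l + 1) := by
      have : x < ⌊x⌋₊ + 1 := Nat.lt_floor_add_one x
      have h : (⌊x⌋₊ : ℝ) + 1 ≤ 2 ^ (l + 1) := by exact_mod_cast hxl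
      linarith
    have hlog2 : Real.log 2 < 1 := by have := Real.log_two_lt_d9; linarith
    have hlog2' : 1 / 2 < Real.log 2 := by have := Real.log_two_gt_d9; linarith
    have a2 : Real.log x ≤ 2 ^ (k + 1) := by
      have := Real.log_le_log hx0 a1.le
      rw [Real.log_pow] at this
      have h : ((l + 1 : ℕ) : ℝ) ≤ 2 ^ (k + 1) := by exact_mod_cast hlk
      have h' : (0 : ℝ) ≤ ((l + 1 : ℕ) : ℝ) := by positivity
      nlinarith
    have b1 : (2 : ℝ) ^ l ≤ x := le_trans (by exact_mod_cast hlx) hfl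
    have b2 : (16 : ℝ) ≤ Real.log x := by
      have := Real.log_le_log (by positivity) b1
      rw [Real.log_pow] at this
      have h : (32 : ℝ) ≤ l := by exact_mod_cast (by omega : 32 ≤ l)
      nlinarith
    have a3 : Real.log (Real.log x) ≤ (t + 2) ^ 2 := by
      have := Real.log_le_log (by linarith) a2
      rw [Real.log_pow] at this
      have h : ((k + 1 : ℕ) : ℝ) ≤ (t + 2) ^ 2 := by exact_mod_cast hkt
      have h' : (0 : ℝ) ≤ ((k + 1 : ℕ) : ℝ) := by positivity
      nlinarith
    have b3 : 0 < Real.log (Real.log x) := Real.log_pos (by linarith)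
    have ht3 : (3 : ℝ) ≤ t := by exact_mod_cast ht
    have a4 : Real.log (Real.log x) ≤ t ^ 4 := by
      refine a3.trans ?_
      have : (t : ℝ) + 2 ≤ t ^ 2 := by nlinarith
      calc ((t : ℝ) + 2) ^ 2 ≤ ((t : ℝ) ^ 2) ^ 2 := by gcongr
        _ = (t : ℝ) ^ 4 := by ring
    have := Real.log_le_log b3 a4
    rw [Real.log_pow] at this
    exact_mod_cast this

lemma eventual_bound : ∀ᶠ x : ℝ in atTop,
    (countOf Cset x : ℝ) ≤ 24 * (x / Real.log (Real.log (Real.log x))) := by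
  have hl3 : Tendsto (fun x : ℝ => Real.log (Real.log (Real.log x))) atTop atTop :=
    Real.tendsto_log_atTop.comp (Real.tendsto_log_atTop.comp Real.tendsto_log_atTop)
  filter_upwards [eventually_ge_atTop ((2 : ℝ) ^ 2 ^ 16), hl3.eventually_gt_atTop 0] with x hx hpos
  have hx1 : 1 ≤ x := le_trans (one_le_pow₀ (by norm_num)) hx
  obtain ⟨k, hk⟩ : ∃ k, k = Nat.log 2 (Nat.log 2 ⌊x⌋₊) := ⟨_, rfl⟩
  have hfl : 2 ^ 2 ^ 16 ≤ ⌊x⌋₊ := Nat.le_floor (by push_cast; exact hx)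
  have h1 : 2 ^ 16 ≤ Nat.log 2 ⌊x⌋₊ := Nat.le_log_of_pow_le (by norm_num) hfl
  have h2 : 16 ≤ k := by rw [hk]; exact Nat.le_log_of_pow_le (by norm_num) h1
  have h3 : 4 ≤ Nat.sqrt k := Nat.le_sqrt.2 (by omega)
  have h4 := Nat.sqrt_le' k
  have h5 := Nat.lt_succ_sqrt' k
  obtain ⟨t, ht⟩ : ∃ t, Nat.sqrt k = t + 1 := ⟨Nat.sqrt k - 1, by omega⟩
  rw [ht] at h3 h4 h5
  obtain ⟨m1, m2⟩ := main_bound x hx1 k t (by omega) hk h4 h5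
  refine m1.trans ?_
  have hlog : 0 < Real.log t := by linarith
  rw [← mul_div_assoc, div_le_div_iff₀ hlog hpos]
  nlinarith

theorem stmt_11 :
    ((fun x : ℝ => (countOf Cset x : ℝ)) =O[atTop]
        fun x : ℝ => x / Real.log (Real.log (Real.log x))) ∧
      (fun x : ℝ => (countOf Cset x : ℝ)) =o[atTop] (fun x : ℝ => x) := by
  
  have hl3 : Tendsto (fun x : ℝ => Real.log (Real.log (Real.log x))) atTop atTop :=
    Real.tendsto_log_atTop.comp (Real.tendsto_log_atTop.comp Real.tendsto_log_atTop)
  have hO : (fun x : ℝ => (countOf Cset x : ℝ)) =O[atTop]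
        fun x : ℝ => x / Real.log (Real.log (Real.log x)) := by
    apply Asymptotics.IsBigO.of_bound 24
    filter_upwards [eventual_bound] with x hx
    rw [Real.norm_natCast]
    exact hx.trans (mul_le_mul_of_nonneg_left (Real.le_norm_self _) (by norm_num))
  refine ⟨hO, hO.trans_isLittleO ?_⟩
  have h0 : Tendsto (fun x : ℝ => (Real.log (Real.log (Real.log x)))⁻¹) atTop (nhds 0) :=
    hl3.inv_tendsto_atTop
  have h1 := (Asymptotics.isBigO_refl (fun x : ℝ => x) atTop).mul_isLittleO
    ((Asymptotics.isLittleO_one_iff ℝ).2 h0)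
  simpa [div_eq_mul_inv] using h1
end
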